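/- arXiv:1708.06054 — 2 statements merged into one kernel-verified Lean document; each statement's English description precedes it below -/
import Mathlib

section
/- The binary code H generated by the lines of P²(F₄) and the shortened Golay code C₂₁ are equivalent codes, i.e. there exists a bijection between their coordinate sets carrying one code onto the other. -/
open scoped BigOperators

/-- A generator matrix of the extended binary Golay code (MOG coordinates). -/
def golayMatrix : Matrix (Fin 12) (Fin 24) (ZMod 2) :=
  !![0, 0, 0, 0, 0, 0, 0, 0, 0, 0, 0, 0, 0, 0, 0, 0, 1, 1, 1, 1, 1, 1, 1, 1;
    0, 0, 0, 0, 0, 0, 0, 0, 0, 0, 0, 0, 1, 1, 1, 1, 0, 0, 0, 0, 1, 1, 1, 1;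
    0, 0, 0, 0, 0, 0, 0, 0, 0, 0, 1, 1, 0, 0, 1, 1, 0, 0, 1, 1, 0, 0, 1, 1;
    0, 0, 0, 0, 0, 0, 0, 0, 0, 1, 0, 1, 0, 1, 0, 1, 0, 1, 0, 1, 0, 1, 0, 1;
    0, 0, 0, 0, 0, 0, 0, 0, 1, 0, 0, 1, 0, 1, 1, 0, 0, 1, 1, 0, 1, 0, 0, 1;
    0, 0, 0, 0, 0, 0, 1, 1, 0, 0, 0, 0, 0, 0, 1, 1, 0, 1, 1, 0, 0, 1, 0, 1;
    0, 0, 0, 0, 0, 1, 0, 1, 0, 0, 0, 0, 0, 1, 0, 1, 0, 0, 1, 1, 0, 1, 1, 0;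
    0, 0, 0, 0, 1, 0, 0, 1, 0, 0, 0, 0, 0, 1, 1, 0, 0, 1, 0, 1, 1, 1, 0, 0;
    0, 0, 0, 1, 0, 0, 0, 1, 0, 0, 0, 1, 0, 0, 0, 1, 0, 1, 1, 1, 1, 0, 0, 0;
    0, 0, 1, 0, 0, 0, 0, 1, 0, 0, 0, 1, 0, 0, 1, 0, 0, 0, 1, 0, 1, 1, 1, 0;
    0, 1, 0, 0, 0, 0, 0, 1, 0, 0, 0, 1, 0, 1, 0, 0, 0, 0, 0, 1, 1, 0, 1, 1;
    1, 0, 0, 0, 0, 0, 0, 1, 0, 0, 0, 1, 0, 1, 1, 1, 0, 1, 0, 0, 0, 0, 1, 0]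

/-- The extended binary Golay code `C₂₄`. -/
def GolayCode : Submodule (ZMod 2) (Fin 24 → ZMod 2) :=
  Submodule.span (ZMod 2) (Set.range fun i => golayMatrix i)

/-- Membership in the Leech lattice `Λ₂₄ ⊂ ℤ²⁴` (coordinates scaled by `√8`),
via the standard congruence characterization. -/
def IsLeech (x : Fin 24 → ℤ) : Prop :=
  ∃ m : ℤ, (m = 0 ∨ m = 1) ∧ (∀ i, (2:ℤ) ∣ (x i - m)) ∧
    ((fun i => if (4:ℤ) ∣ (x i - m - 2) then (1 : ZMod 2) else 0) ∈ GolayCode) ∧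
    (8:ℤ) ∣ ((∑ i, x i) - 4 * m)

/-- The inner product `⟨x, y⟩ = (Σ xᵢ yᵢ)/8` on the Leech lattice. -/
def leechInner (x y : Fin 24 → ℤ) : ℚ := (∑ i, (x i : ℚ) * (y i : ℚ)) / 8

/-- The lattice point `A = (0²¹, 4, 0, −4)`. -/
def vA : Fin 24 → ℤ := fun i => if i.val = 21 then 4 else if i.val = 23 then -4 else 0

/-- The lattice point `B = (0²¹, 0, 4, −4)`. -/
def vB : Fin 24 → ℤ := fun i => if i.val = 22 then 4 else if i.val = 23 then -4 else 0

/-- `T_AB`: lattice points `T` with `|OT| = |AT| = |BT| = 2`. -/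
def TAB : Set (Fin 24 → ℤ) :=
  {T | IsLeech T ∧ leechInner T T = 4 ∧
       leechInner (T - vA) (T - vA) = 4 ∧ leechInner (T - vB) (T - vB) = 4}
open scoped Classical

/-- Codewords of `C₂₄` taking equal values at positions 22, 23, 24. -/
def GolayEq : Submodule (ZMod 2) (Fin 24 → ZMod 2) :=
  GolayCode
    ⊓ LinearMap.ker
        ((LinearMap.proj ⟨21, by omega⟩ : (Fin 24 → ZMod 2) →ₗ[ZMod 2] ZMod 2)
          - LinearMap.proj ⟨23, by omega⟩)
    ⊓ LinearMap.ker
        ((LinearMap.proj ⟨22, by omega⟩ : (Fin 24 → ZMod 2) →ₗ[ZMod 2] ZMod 2)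
          - LinearMap.proj ⟨23, by omega⟩)

/-- The shortened code `C₂₁`. -/
def C21 : Submodule (ZMod 2) (Fin 21 → ZMod 2) :=
  Submodule.map
    (LinearMap.funLeft (ZMod 2) (ZMod 2) (Fin.castLE (by omega))) GolayEq

/-- The field `F₄`. -/
abbrev F4 : Type := GaloisField 2 2

/-- Points of `P²(F₄)` as 1-dimensional subspaces of `F₄³`. -/
def ProjPt : Type := {p : Submodule F4 (Fin 3 → F4) // Module.finrank F4 p = 1}

/-- `F₄`-rational lines of `P²` as 2-dimensional subspaces of `F₄³`. -/
def ProjLine : Type := {l : Submodule F4 (Fin 3 → F4) // Module.finrank F4 l = 2}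

/-- Characteristic vector of a line. -/
noncomputable def lineWord (l : ProjLine) : ProjPt → ZMod 2 :=
  fun p => if p.val ≤ l.val then 1 else 0

/-- The code `H` spanned by the line words. -/
noncomputable def Hcode : Submodule (ZMod 2) (ProjPt → ZMod 2) :=
  Submodule.span (ZMod 2) (Set.range lineWord)

/-!
Label the points of `P²(F₄)` by `Fin 21` so that every line, extended by `(1, 1, 1)`, is orthogonal
to the rows of `golayMatrix`. The Golay code is self-dual, so these extended lines are codewords,
and in the labelled coordinates `H ⊆ C₂₁`. Equality follows by counting dimensions: the two
equations at the last three positions cut the Golay code down from dimension `12` to `10`, while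
ten lines with a triangular incidence pattern show `dim H ≥ 10`.
-/

section Orthogonality

lemma mem_orthogonal_span_iff {R M : Type*} [CommRing R] [AddCommGroup M] [Module R M]
    {B : LinearMap.BilinForm R M} {s : Set M} {v : M} :
    v ∈ B.orthogonal (Submodule.span R s) ↔ ∀ u ∈ s, B u v = 0 :=
  Submodule.span_le (p := LinearMap.ker (B.flip v))

lemma orthogonal_eq_self_of_le_of_finrank_le {K V : Type*} [Field K] [AddCommGroup V] [Module K V]
    [FiniteDimensional K V] {B : LinearMap.BilinForm K V} (hB : B.Nondegenerate) {W : Submodule K V}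
    (hW : W ≤ B.orthogonal W) (hdim : Module.finrank K V ≤ 2 * Module.finrank K W) :
    B.orthogonal W = W := by
  refine (Submodule.eq_of_le_of_finrank_le hW ?_).symm
  rw [LinearMap.BilinForm.finrank_orthogonal hB]
  omega

end Orthogonality

section DotProduct

variable (R n : Type*) [CommRing R] [Fintype n]

/-- The standard dot product on `n → R` as a bilinear form, with respect to which dual codes and
polar lines are taken. -/
def dotForm : LinearMap.BilinForm R (n → R) := dotProductBilin R R

variable {R n}

lemma dotForm_apply (u v : n → R) : dotForm R n u v = u ⬝ᵥ v := rfl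

lemma dotForm_isSymm : (dotForm R n).IsSymm := ⟨dotProduct_comm⟩

lemma dotForm_nondegenerate : (dotForm R n).Nondegenerate :=
  (LinearMap.IsRefl.nondegenerate_iff_separatingLeft (B := dotForm R n) dotForm_isSymm.isRefl).2
    fun _ => dotProduct_eq_zero_iff.1

lemma dotForm_orthogonal_involutive {K : Type*} [Field K] :
    Function.Involutive (dotForm K n).orthogonal :=
  LinearMap.BilinForm.orthogonal_orthogonal dotForm_nondegenerate dotForm_isSymm.isRefl

end DotProduct

lemma card_le_finrank_span_row_of_isUpperTriangular {K k m n : Type*} [Field K] [Fintype k]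
    [LinearOrder k] [Finite m] [Finite n] (A : Matrix m n K) (r : k → m) (c : k → n)
    (htri : (A.submatrix r c).IsUpperTriangular) (hdiag : ∀ i, A (r i) (c i) ≠ 0) :
    Fintype.card k ≤ Module.finrank K (Submodule.span K (Set.range A.row)) := by
  have := Fintype.ofFinite n
  have hdet : (A.submatrix r c).det ≠ 0 := by
    rw [Matrix.det_of_isUpperTriangular htri]
    exact Finset.prod_ne_zero_iff.2 fun i _ => hdiag i
  rw [← Matrix.rank_eq_finrank_span_row, ← Matrix.rank_of_det_ne_zero hdet]
  exact A.rank_submatrix_le r c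

section Golay

/-- The position of the leading entry of each row of the reduced matrix `golayMatrix`. -/
def golayPivot : Fin 12 → Fin 24 := ![16, 12, 10, 9, 8, 6, 5, 4, 3, 2, 1, 0]

lemma golayMatrix_submatrix_golayPivot : golayMatrix.submatrix id golayPivot = 1 := by
  decide +kernel

lemma golayMatrix_row_dotProduct_row : ∀ i j, golayMatrix i ⬝ᵥ golayMatrix j = 0 := by
  decide +kernel

lemma golayMatrix_mem_GolayCode (i : Fin 12) : golayMatrix i ∈ GolayCode :=
  Submodule.subset_span ⟨i, rfl⟩

lemma finrank_GolayCode : Module.finrank (ZMod 2) GolayCode = 12 := by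
  refine le_antisymm (finrank_range_le_card (R := ZMod 2) fun i => golayMatrix i) ?_
  refine card_le_finrank_span_row_of_isUpperTriangular golayMatrix id golayPivot ?_ fun i => ?_
  · rw [golayMatrix_submatrix_golayPivot]
    exact Matrix.blockTriangular_one
  · have hpivot := congrFun₂ golayMatrix_submatrix_golayPivot i i
    rw [Matrix.submatrix_apply, Matrix.one_apply_eq] at hpivot
    exact hpivot ▸ one_ne_zero

lemma GolayCode_le_orthogonal : GolayCode ≤ (dotForm (ZMod 2) (Fin 24)).orthogonal GolayCode := by
  refine Submodule.span_le.2 ?_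
  rintro _ ⟨j, rfl⟩
  refine mem_orthogonal_span_iff.2 ?_
  rintro _ ⟨i, rfl⟩
  exact golayMatrix_row_dotProduct_row i j

lemma orthogonal_GolayCode : (dotForm (ZMod 2) (Fin 24)).orthogonal GolayCode = GolayCode :=
  orthogonal_eq_self_of_le_of_finrank_le dotForm_nondegenerate GolayCode_le_orthogonal <| by
    rw [finrank_GolayCode, Module.finrank_fin_fun]

lemma mem_GolayCode_iff {x : Fin 24 → ZMod 2} :
    x ∈ GolayCode ↔ ∀ i, golayMatrix i ⬝ᵥ x = 0 := by
  rw [← orthogonal_GolayCode]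
  exact mem_orthogonal_span_iff.trans Set.forall_mem_range

lemma finrank_GolayEq_le : Module.finrank (ZMod 2) GolayEq ≤ 10 := by
  let coord (i : Fin 24) : (Fin 24 → ZMod 2) →ₗ[ZMod 2] ZMod 2 := LinearMap.proj i
  let f := coord 21 - coord 23
  let g := coord 22 - coord 23
  -- Rows `5` and `6` of `golayMatrix` end in `101` and `110`.
  have hf_ne : f (golayMatrix 6) ≠ 0 := by decide
  have hf_eq : f (golayMatrix 5) = 0 := by decide
  have hg_ne : g (golayMatrix 5) ≠ 0 := by decide
  have hlt_f : GolayCode ⊓ LinearMap.ker f < GolayCode :=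
    inf_lt_left.2 fun hle => hf_ne (hle (golayMatrix_mem_GolayCode 6))
  have hlt_g : GolayEq < GolayCode ⊓ LinearMap.ker f :=
    inf_lt_left.2 fun hle => hg_ne (hle ⟨golayMatrix_mem_GolayCode 5, hf_eq⟩)
  have hfinrank_f := Submodule.finrank_lt_finrank_of_lt hlt_f
  have hfinrank_g := Submodule.finrank_lt_finrank_of_lt hlt_g
  rw [finrank_GolayCode] at hfinrank_f
  omega

lemma finrank_C21_le : Module.finrank (ZMod 2) C21 ≤ 10 :=
  (Submodule.finrank_map_le _ _).trans finrank_GolayEq_le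

lemma mem_C21_of_append_one_mem_GolayCode {w : Fin 21 → ZMod 2}
    (hw : Fin.append w (1 : Fin 3 → ZMod 2) ∈ GolayCode) : w ∈ C21 := by
  have hlast (k : Fin 3) : Fin.append w (1 : Fin 3 → ZMod 2) (Fin.natAdd 21 k) = 1 :=
    Fin.append_right w 1 k
  refine ⟨Fin.append w (1 : Fin 3 → ZMod 2), ⟨⟨hw, ?_⟩, ?_⟩, ?_⟩
  · exact sub_eq_zero.2 ((hlast 0).trans (hlast 2).symm)
  · exact sub_eq_zero.2 ((hlast 1).trans (hlast 2).symm)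
  · exact funext (Fin.append_left w (1 : Fin 3 → ZMod 2))

end Golay

section FiniteModel

/-- The field with four elements in the form `F₂[ω] / (ω² + ω + 1)`, whose operations, unlike those
of `GaloisField 2 2`, can be evaluated. -/
abbrev F4Model : Type := QuadraticAlgebra (ZMod 2) 1 1

instance : Fact (∀ r : ZMod 2, r ^ 2 ≠ 1 + 1 * r) := ⟨by decide⟩

lemma card_F4Model : Nat.card F4Model = 4 := by
  rw [Nat.card_congr (QuadraticAlgebra.equivProd 1 1), Nat.card_prod, Nat.card_zmod]

lemma card_F4 : Nat.card F4 = 4 := GaloisField.card 2 2 two_ne_zero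

lemma nonempty_F4Model_ringEquiv : Nonempty (F4Model ≃+* F4) := by
  have : Finite F4Model := Nat.finite_of_card_ne_zero (by rw [card_F4Model]; decide)
  have := Fintype.ofFinite F4Model
  have := Fintype.ofFinite F4
  refine ⟨FiniteField.ringEquivOfCardEq ?_⟩
  rw [Fintype.card_eq_nat_card, Fintype.card_eq_nat_card, card_F4Model, card_F4]

/-- Homogeneous coordinates of the points of the plane over `F4Model`, in the order of the
positions of `C₂₁`. The positions `4c, …, 4c + 3` and `20, …, 23` are the tetrads of a sextet of the
Golay code, so each row below has to be a line when completed by the last point; the orders of the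
third coordinates are chosen to make the sixteen other lines extend to octads as well. -/
def pointVec : Fin 21 → Fin 3 → F4Model :=
  let ω : F4Model := QuadraticAlgebra.omega
  let η : F4Model := ω + 1
  ![![0, 1, 0], ![0, 1, 1], ![0, 1, ω], ![0, 1, η],
    ![1, 0, 0], ![1, 0, η], ![1, 0, 1], ![1, 0, ω],
    ![1, 1, 0], ![1, 1, ω], ![1, 1, η], ![1, 1, 1],
    ![1, ω, 0], ![1, ω, 1], ![1, ω, ω], ![1, ω, η],
    ![1, η, 0], ![1, η, η], ![1, η, 1], ![1, η, ω],
    ![0, 0, 1]]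

/-- The incidence matrix of the plane: row `j` is the characteristic vector of the line with
equation `pointVec j ⬝ᵥ x = 0`. -/
def incidence : Matrix (Fin 21) (Fin 21) (ZMod 2) :=
  Matrix.of fun j i => if pointVec j ⬝ᵥ pointVec i = 0 then 1 else 0

lemma pointVec_ne_zero : ∀ i, pointVec i ≠ 0 := by
  decide +kernel

lemma incidence_col_injective : Function.Injective incidence.col := by
  decide +kernel

lemma golayMatrix_dotProduct_append_incidence_row : ∀ i j,
    golayMatrix i ⬝ᵥ Fin.append (incidence.row j) (1 : Fin 3 → ZMod 2) = 0 := by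
  decide +kernel

/-- Ten lines that are linearly independent in the code, because each of them contains the point
of `triangularPoints` with the same index and no earlier one. -/
def triangularLines : Fin 10 → Fin 21 := ![16, 4, 14, 0, 11, 1, 3, 13, 12, 15]

/-- The points paired with `triangularLines`. -/
def triangularPoints : Fin 10 → Fin 21 := ![12, 0, 13, 5, 8, 1, 9, 6, 19, 3]

lemma incidence_triangular_isUpperTriangular :
    (incidence.submatrix triangularLines triangularPoints).IsUpperTriangular := by
  have hzero : ∀ i j, j < i → incidence (triangularLines i) (triangularPoints j) = 0 := by
    decide +kernel
  exact hzero

lemma incidence_triangular_diag_ne_zero :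
    ∀ i, incidence (triangularLines i) (triangularPoints i) ≠ 0 := by
  decide +kernel

lemma span_incidence_row_eq_C21 :
    Submodule.span (ZMod 2) (Set.range incidence.row) = C21 := by
  refine Submodule.eq_of_le_of_finrank_le (Submodule.span_le.2 ?_) (finrank_C21_le.trans ?_)
  · rintro _ ⟨j, rfl⟩
    exact mem_C21_of_append_one_mem_GolayCode <|
      mem_GolayCode_iff.2 fun i => golayMatrix_dotProduct_append_incidence_row i j
  · exact card_le_finrank_span_row_of_isUpperTriangular incidence triangularLines triangularPoints
      incidence_triangular_isUpperTriangular incidence_triangular_diag_ne_zero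

end FiniteModel

section ProjectivePlane

lemma card_ProjPt : Nat.card ProjPt = 21 := by
  calc Nat.card ProjPt
      = Nat.card (Projectivization F4 (Fin 3 → F4)) :=
        (Nat.card_congr (Projectivization.equivSubmodule F4 (Fin 3 → F4))).symm
    _ = ∑ i ∈ Finset.range 3, 4 ^ i := by
        rw [Projectivization.card_of_finrank F4 _ (Module.finrank_fin_fun F4), card_F4]
    _ = 21 := by decide

/-- The polarity of the projective plane that sends a point to its orthogonal line. -/
noncomputable def polarity : ProjPt ≃ ProjLine :=
  dotForm_orthogonal_involutive.toPerm.subtypeEquiv fun p => by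
    rw [Function.Involutive.coe_toPerm,
      LinearMap.BilinForm.finrank_orthogonal dotForm_nondegenerate, Module.finrank_fin_fun]
    omega

variable (φ : F4Model ≃+* F4)

lemma ringEquiv_comp_pointVec_ne_zero (i : Fin 21) : φ ∘ pointVec i ≠ 0 := fun h =>
  pointVec_ne_zero i <| funext fun t => (map_eq_zero_iff φ φ.injective).1 (congrFun h t)

/-- The point of `P²(F₄)` at position `i` of `C₂₁`, after identifying `F4Model` with `F₄`. -/
noncomputable def pointAt (i : Fin 21) : ProjPt :=
  ⟨Submodule.span F4 {φ ∘ pointVec i}, finrank_span_singleton (ringEquiv_comp_pointVec_ne_zero φ i)⟩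

lemma pointAt_le_polarity_iff (i j : Fin 21) :
    (pointAt φ i).val ≤ (polarity (pointAt φ j)).val ↔ pointVec j ⬝ᵥ pointVec i = 0 := by
  calc (pointAt φ i).val ≤ (polarity (pointAt φ j)).val
      ↔ φ ∘ pointVec i ∈ (dotForm F4 (Fin 3)).orthogonal (Submodule.span F4 {φ ∘ pointVec j}) :=
        Submodule.span_singleton_le_iff_mem _ _
    _ ↔ (φ ∘ pointVec j) ⬝ᵥ (φ ∘ pointVec i) = 0 := by
        simp only [mem_orthogonal_span_iff, Set.mem_singleton_iff, forall_eq, dotForm_apply]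
    _ ↔ pointVec j ⬝ᵥ pointVec i = 0 := by
        rw [← map_eq_zero_iff φ φ.injective]
        exact Eq.congr_left (RingHom.map_dotProduct φ.toRingHom _ _).symm

lemma lineWord_polarity_pointAt (i j : Fin 21) :
    lineWord (polarity (pointAt φ j)) (pointAt φ i) = incidence j i := by
  simp only [lineWord, pointAt_le_polarity_iff, incidence, Matrix.of_apply]

lemma pointAt_injective : Function.Injective (pointAt φ) := fun i i' h =>
  incidence_col_injective <| funext fun j => by
    rw [Matrix.col_apply, Matrix.col_apply, ← lineWord_polarity_pointAt φ, h,
      lineWord_polarity_pointAt]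

lemma pointAt_bijective : Function.Bijective (pointAt φ) := by
  have : Finite ProjPt := Nat.finite_of_card_ne_zero (by rw [card_ProjPt]; decide)
  exact (Nat.bijective_iff_injective_and_card _).2
    ⟨pointAt_injective φ, by rw [card_ProjPt, Nat.card_fin]⟩

lemma Hcode_eq_span_lineWord_polarity_pointAt :
    Hcode = Submodule.span (ZMod 2) (Set.range fun j => lineWord (polarity (pointAt φ j))) := by
  rw [Hcode, ← (polarity.surjective.comp (pointAt_bijective φ).surjective).range_comp]
  rfl

lemma map_pointAt_Hcode :
    Hcode.map (LinearMap.funLeft (ZMod 2) (ZMod 2) (pointAt φ)) = C21 := by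
  rw [Hcode_eq_span_lineWord_polarity_pointAt φ, Submodule.map_span, ← Set.range_comp,
    ← span_incidence_row_eq_C21]
  congr! 2
  funext j i
  exact lineWord_polarity_pointAt φ i j

end ProjectivePlane

/-- the codes `H` and `C₂₁` are equivalent: some bijection of the
coordinate sets carries one onto the other. -/
theorem Hcode_equiv_C21 :
    ∃ e : ProjPt ≃ Fin 21,
      ∀ w : Fin 21 → ZMod 2, w ∈ C21 ↔ (fun p => w (e p)) ∈ Hcode := by
  obtain ⟨φ⟩ := nonempty_F4Model_ringEquiv
  let point : Fin 21 ≃ ProjPt := .ofBijective (pointAt φ) (pointAt_bijective φ)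
  let relabel := LinearEquiv.funCongrLeft (ZMod 2) (ZMod 2) point
  have hC21 : C21 = Hcode.map relabel.toLinearMap := (map_pointAt_Hcode φ).symm
  refine ⟨point.symm, fun w => ?_⟩
  rw [hC21]
  exact Submodule.mem_map_equiv (e := relabel) Hcode
end

section
/- With A = (0^{21},4,0,−4) and B = (0^{21},0,4,−4), the orthogonal complement R_{AB}^⊥ in the Leech lattice equals the set of Leech lattice vectors x with x₂₂ = x₂₃ = x₂₄, and this lattice is isomorphic to the laminated lattice Λ₂₂ of rank 22. -/
open scoped BigOperators

/-- The orthogonal complement `R_AB^⊥` of `R_AB` in the Leech lattice. -/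
def RperpSet : Set (Fin 24 → ℤ) :=
  {v | IsLeech v ∧ leechInner v vA = 0 ∧ leechInner v vB = 0}

/-- The laminated lattice `Λ₂₂`, realized (following Conway–Sloane, Fig. 6.2)
as the section of `Λ₂₄` by the hyperplanes `x₂₂ = x₂₃ = x₂₄`. -/
def Lam22Set : Set (Fin 24 → ℤ) :=
  {v | IsLeech v ∧ v ⟨21, by omega⟩ = v ⟨22, by omega⟩ ∧
       v ⟨22, by omega⟩ = v ⟨23, by omega⟩}

/-!
Pairing `v` with `A` and `B` gives half of `v₂₂ - v₂₄` and of `v₂₃ - v₂₄`, so `R_AB^⊥` is the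
intersection of `Λ₂₄` with the kernel of `v ↦ (v₂₂ - v₂₄, v₂₃ - v₂₄)`, which has rank
`24 - 2 = 22`. Since `Λ₂₄` is a subgroup containing `8ℤ²⁴`, the intersection contains `8` times
this kernel and therefore also has rank 22; a `ℤ`-basis of it remains independent over `ℚ`.
-/

section Rank

open Module

theorem finrank_eq_of_smul_mem {R M : Type*} [CommRing R] [AddCommGroup M] [Module R M]
    {L K : Submodule R M} (hLK : L ≤ K) {a : R} (ha : IsSMulRegular M a)
    (haK : ∀ x ∈ K, a • x ∈ L) : finrank R L = finrank R K := by
  let mulA : K →ₗ[R] L := (LinearMap.lsmul R M a).restrict haK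
  have mulA_injective : Function.Injective mulA := fun x y hxy =>
    Subtype.ext (ha (congrArg Subtype.val hxy))
  exact congrArg Cardinal.toNat
    ((Submodule.rank_mono hLK).antisymm (mulA.rank_le_of_injective mulA_injective))

theorem finrank_ker_add_finrank_of_surjective {R M N : Type*} [CommRing R] [IsDomain R]
    [AddCommGroup M] [Module R M] [Module.Finite R M] [AddCommGroup N] [Module R N]
    {f : M →ₗ[R] N} (hf : Function.Surjective f) :
    finrank R (LinearMap.ker f) + finrank R N = finrank R M := by
  rw [← (f.quotKerEquivOfSurjective hf).finrank_eq, add_comm,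
    Submodule.finrank_quotient_add_finrank]

theorem exists_basis_linearIndependent_algebraMap {R K ι : Type*} [CommRing R]
    [IsPrincipalIdealRing R] [CommRing K] [IsDomain K] [Algebra R K] [FaithfulSMul R K] [Finite ι]
    (L : Submodule R (ι → R)) {n : ℕ} (hn : finrank R L = n) :
    ∃ b : Fin n → ι → R, LinearIndependent K (fun i => algebraMap R K ∘ b i) ∧
      Submodule.span R (Set.range b) = L := by
  have : IsDomain R := .of_faithfulSMul R K
  let e : Basis (Fin n) R L := finBasisOfFinrankEq R L hn
  refine ⟨L.subtype ∘ e, ?_, ?_⟩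
  · exact linearIndependent_algebraMap_comp_iff.2
      (e.linearIndependent.map' L.subtype L.ker_subtype)
  · rw [Set.range_comp, Submodule.span_image, e.span_eq, Submodule.map_subtype_top]

end Rank

theorem sum_golayMatrix : ∑ i, golayMatrix i = 1 := by
  decide +kernel

theorem one_mem_golayCode : (1 : Fin 24 → ZMod 2) ∈ GolayCode := by
  rw [← sum_golayMatrix]
  exact Submodule.sum_mem _ fun i _ => Submodule.subset_span ⟨i, rfl⟩

theorem ite_four_dvd_eq_intCast (k : ℤ) :
    (if 4 ∣ 2 * k - 2 then (1 : ZMod 2) else 0) = k := by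
  split_ifs with h
  · exact_mod_cast ((ZMod.intCast_eq_intCast_iff_dvd_sub 1 k 2).2 (by push_cast; lia))
  · exact ((ZMod.intCast_zmod_eq_zero_iff_dvd k 2).2 (by push_cast; lia)).symm

/-- The congruences defining the Leech lattice for the class `m`, with the code word read off as
`y mod 2` from `x = m + 2y`. Unlike in `IsLeech`, the integer `m` is not restricted to `{0, 1}`,
which makes the conditions linear in `(m, x, y)`. -/
structure LeechCongruences (m : ℤ) (x y : Fin 24 → ℤ) : Prop where
  eq_add_two_mul : ∀ i, x i = m + 2 * y i
  intCast_mem_golayCode : (fun i => (y i : ZMod 2)) ∈ GolayCode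
  eight_dvd : 8 ∣ ∑ i, x i - 4 * m

namespace LeechCongruences

variable {m n : ℤ} {x y x' y' : Fin 24 → ℤ}

theorem add (h : LeechCongruences m x y) (h' : LeechCongruences n x' y') :
    LeechCongruences (m + n) (x + x') (y + y') where
  eq_add_two_mul i := by
    simp only [Pi.add_apply, h.eq_add_two_mul i, h'.eq_add_two_mul i]
    ring
  intCast_mem_golayCode := by
    simpa [Pi.add_def] using
      GolayCode.add_mem h.intCast_mem_golayCode h'.intCast_mem_golayCode
  eight_dvd := by
    have eight_dvd_add := dvd_add h.eight_dvd h'.eight_dvd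
    simp only [Pi.add_apply, Finset.sum_add_distrib]
    lia

theorem smul (c : ℤ) (h : LeechCongruences m x y) :
    LeechCongruences (c * m) (c • x) (c • y) where
  eq_add_two_mul i := by
    simp only [Pi.smul_apply, smul_eq_mul, h.eq_add_two_mul i]
    ring
  intCast_mem_golayCode := by
    simpa [Pi.smul_def] using GolayCode.smul_mem (c : ZMod 2) h.intCast_mem_golayCode
  eight_dvd := by
    simpa only [Pi.smul_apply, smul_eq_mul, ← Finset.mul_sum, mul_left_comm 4 c, ← mul_sub] using
      h.eight_dvd.mul_left c

-- Moving `m` by `2k` adds `k` times the all-ones word, which is a code word.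
theorem sub_two_mul (h : LeechCongruences m x y) (k : ℤ) :
    LeechCongruences (m - 2 * k) x (y + fun _ => k) where
  eq_add_two_mul i := by
    simp only [Pi.add_apply, h.eq_add_two_mul i]
    ring
  intCast_mem_golayCode := by
    simpa [Pi.add_def, Pi.smul_def] using GolayCode.add_mem h.intCast_mem_golayCode
      (GolayCode.smul_mem (k : ZMod 2) one_mem_golayCode)
  eight_dvd := by
    have eight_dvd := h.eight_dvd
    lia

theorem isLeech (h : LeechCongruences m x y) : IsLeech x := by
  have h' : LeechCongruences (m % 2) x (y + fun _ => m / 2) := by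
    simpa only [Int.emod_def] using h.sub_two_mul (m / 2)
  refine ⟨m % 2, Int.emod_two_eq_zero_or_one m, fun i => ?_, ?_, h'.eight_dvd⟩
  · exact ⟨_, sub_eq_of_eq_add' (h'.eq_add_two_mul i)⟩
  · simpa only [h'.eq_add_two_mul, add_sub_cancel_left, ite_four_dvd_eq_intCast] using
      h'.intCast_mem_golayCode

end LeechCongruences

theorem isLeech_iff_exists_leechCongruences {x : Fin 24 → ℤ} :
    IsLeech x ↔ ∃ m y, LeechCongruences m x y := by
  refine ⟨?_, fun ⟨m, y, h⟩ => h.isLeech⟩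
  rintro ⟨m, -, even_sub, golay_mem, eight_dvd⟩
  choose y hy using even_sub
  refine ⟨m, y, fun i => eq_add_of_sub_eq' (hy i), ?_, eight_dvd⟩
  simpa only [hy, ite_four_dvd_eq_intCast] using golay_mem

theorem isLeech_eight_smul (z : Fin 24 → ℤ) : IsLeech ((8 : ℤ) • z) := by
  have h : LeechCongruences 0 ((8 : ℤ) • z) ((4 : ℤ) • z) :=
    { eq_add_two_mul i := by
        simp only [Pi.smul_apply, smul_eq_mul]
        ring
      intCast_mem_golayCode := by
        have intCast_eq_zero : (fun i => (((4 : ℤ) • z) i : ZMod 2)) = 0 := by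
          funext i
          have two_dvd : 2 ∣ ((4 : ℤ) • z) i := Dvd.dvd.mul_right (by norm_num) (z i)
          exact (ZMod.intCast_zmod_eq_zero_iff_dvd _ 2).2 two_dvd
        exact intCast_eq_zero ▸ GolayCode.zero_mem
      eight_dvd := by simp [← Finset.mul_sum] }
  exact h.isLeech

/-- The Leech lattice as a `ℤ`-submodule of `ℤ²⁴`. -/
def leechLattice : Submodule ℤ (Fin 24 → ℤ) where
  carrier := {x | IsLeech x}
  zero_mem' := by simpa using isLeech_eight_smul 0
  add_mem' {x x'} hx hx' := by
    obtain ⟨m, y, h⟩ := isLeech_iff_exists_leechCongruences.1 hx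
    obtain ⟨n, y', h'⟩ := isLeech_iff_exists_leechCongruences.1 hx'
    exact (h.add h').isLeech
  smul_mem' c x hx := by
    obtain ⟨m, y, h⟩ := isLeech_iff_exists_leechCongruences.1 hx
    exact (h.smul c).isLeech

theorem leechInner_single_sub_single (v : Fin 24 → ℤ) (i j : Fin 24) (a : ℤ) :
    leechInner v (Pi.single i a - Pi.single j a) = (v i - v j) * a / 8 := by
  simp [leechInner, Pi.single_apply, mul_sub, sub_mul]

theorem vA_eq_single_sub_single : vA = Pi.single 21 4 - Pi.single 23 4 := by
  decide

theorem vB_eq_single_sub_single : vB = Pi.single 22 4 - Pi.single 23 4 := by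
  decide

theorem leechInner_vA_eq_zero_iff {v : Fin 24 → ℤ} : leechInner v vA = 0 ↔ v 21 = v 23 := by
  simp [vA_eq_single_sub_single, leechInner_single_sub_single, sub_eq_zero]

theorem leechInner_vB_eq_zero_iff {v : Fin 24 → ℤ} : leechInner v vB = 0 ↔ v 22 = v 23 := by
  simp [vB_eq_single_sub_single, leechInner_single_sub_single, sub_eq_zero]

/-- The map `x ↦ (x₂₂ - x₂₄, x₂₃ - x₂₄)`, whose kernel is cut out by `x₂₂ = x₂₃ = x₂₄`. The
indices of `Fin 24` start at `0`. -/
def lastCoordDiff : (Fin 24 → ℤ) →ₗ[ℤ] ℤ × ℤ where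
  toFun x := (x 21 - x 23, x 22 - x 23)
  map_add' x y := by simp only [Pi.add_apply, add_sub_add_comm, Prod.mk_add_mk]
  map_smul' c x := by simp [mul_sub]

theorem lastCoordDiff_apply (v : Fin 24 → ℤ) :
    lastCoordDiff v = (v 21 - v 23, v 22 - v 23) := rfl

theorem lastCoordDiff_surjective : Function.Surjective lastCoordDiff := fun ⟨a, b⟩ =>
  ⟨Pi.single 21 a + Pi.single 22 b, by simp [lastCoordDiff_apply]⟩

theorem finrank_ker_lastCoordDiff : Module.finrank ℤ (LinearMap.ker lastCoordDiff) = 22 := by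
  simpa using finrank_ker_add_finrank_of_surjective lastCoordDiff_surjective

/-- `Λ₂₂` as a `ℤ`-submodule of `ℤ²⁴`. -/
def lam22 : Submodule ℤ (Fin 24 → ℤ) := leechLattice ⊓ LinearMap.ker lastCoordDiff

theorem mem_lam22 {v : Fin 24 → ℤ} : v ∈ lam22 ↔ IsLeech v ∧ v 21 = v 23 ∧ v 22 = v 23 := by
  rw [lam22, Submodule.mem_inf, LinearMap.mem_ker, lastCoordDiff_apply, Prod.mk_eq_zero,
    sub_eq_zero, sub_eq_zero]
  rfl

theorem coe_lam22_eq_RperpSet : (lam22 : Set (Fin 24 → ℤ)) = RperpSet := by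
  ext v
  simp only [SetLike.mem_coe, mem_lam22, RperpSet, Set.mem_ofPred_eq, leechInner_vA_eq_zero_iff,
    leechInner_vB_eq_zero_iff]

theorem coe_lam22_eq_Lam22Set : (lam22 : Set (Fin 24 → ℤ)) = Lam22Set := by
  ext v
  refine mem_lam22.trans (and_congr_right fun _ => and_congr_left fun h => ?_)
  exact ⟨fun h' => h'.trans h.symm, fun h' => h'.trans h⟩

theorem finrank_lam22 : Module.finrank ℤ lam22 = 22 := by
  rw [← finrank_ker_lastCoordDiff]
  exact finrank_eq_of_smul_mem inf_le_right (smul_right_injective _ (by norm_num : (8 : ℤ) ≠ 0))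
    fun v hv => ⟨isLeech_eight_smul v, Submodule.smul_mem _ _ hv⟩

/-- `R_AB^⊥` equals the set of Leech vectors with
`x₂₂ = x₂₃ = x₂₄` (the laminated lattice `Λ₂₂`), a lattice of rank 22. -/
theorem Rperp_eq_Lam22 :
    RperpSet = Lam22Set ∧
    ∃ b : Fin 22 → (Fin 24 → ℤ),
      (∀ i, b i ∈ RperpSet) ∧
      LinearIndependent ℚ (fun i j => ((b i j : ℚ))) ∧
      ∀ v ∈ RperpSet, v ∈ AddSubgroup.closure (Set.range b) := by
  refine ⟨coe_lam22_eq_RperpSet.symm.trans coe_lam22_eq_Lam22Set, ?_⟩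
  obtain ⟨b, b_indep, b_span⟩ :=
    exists_basis_linearIndependent_algebraMap (K := ℚ) lam22 finrank_lam22
  rw [← coe_lam22_eq_RperpSet, ← b_span]
  refine ⟨b, fun i => Submodule.subset_span ⟨i, rfl⟩, b_indep, fun v hv => ?_⟩
  rwa [← Submodule.span_int_eq_addSubgroupClosure]
end
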